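/- Fix integers n ≥ 1, s ≥ 0, r ≥ 1, δ ∈ {0,1,…,r}^{n−1}, and d_1, d_2 with d_1 > r(n−1) and d_2 > r(n−1). Then the set P^δ ⊆ ℝ^{2n} is a nonempty compact convex polytope, every extreme point of P^δ has integer coordinates, and the number of extreme points of P^δ equals (ℓ(δ)+1)·∏_{k=1}^{c(δ)} (n_k(δ)+1). -/

import Mathlib

/-!
Write `σ_j = δ_1 + ⋯ + δ_{j-1}`, `x_j = a_j - σ_j` and `y_j = b_j - L_j`, where `L_j`, `R_j` are
given by the defining sums at every index `j`, not only at the ends of a column. In these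
coordinates `P^δ` says: `x` is weakly increasing with values in `[0, D]`, `D = d_1 - |δ|`, and
constant on blocks; `y` is weakly increasing along each column, with values in `[0, Λ_j]`,
`Λ_j = d_2 + s a_j - L_j - R_j` (`PdeltaR_eq_model`). The sum `L_j + R_j` depends only on `σ_j`
and is at most `r (n - 1)`, so `Λ` is constant on columns and positive, and `D > 0`.

A point is extreme iff every `x_j` is `0` or `D` and every `y_j` is `0` or `Λ_j`
(`mem_extreme_iff`). If this holds, the point is not in the interior of a segment, one coordinate
at a time. Conversely, `τ ↦ τ ± τ (D - τ) / D` are increasing self-maps of `[0, D]` fixing only the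
endpoints. Applying them to `x` while rescaling `y` by the resulting ratio of the `Λ_j` stays in the
polytope, and the original point is the midpoint of the two results; so extremality forces
`x_j ∈ {0, D}`. The same maps on `[0, Λ_j]`, applied to `y` with `x` fixed, force
`y_j ∈ {0, Λ_j}`.

Integrality is then immediate. By monotonicity an extreme point is determined by the number of
blocks on which `x = 0` and, for each column, the number of its members with `y = 0`; all choices
occur (`extreme_ncard`).
-/

open Finset

noncomputable section

/-- Partial sums `δ_1 + ⋯ + δ_{j-1}` of the type vector `δ`. -/
def pSum (n r : ℕ) (δ : Fin (n - 1) → Fin (r + 1)) (j : Fin n) : ℤ :=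
  ∑ i ∈ univ.filter (fun i : Fin (n - 1) => (i : ℕ) < (j : ℕ)), ((δ i : ℕ) : ℤ)

/-- `|δ| = δ_1 + ⋯ + δ_{n-1}`. -/
def delTotal (n r : ℕ) (δ : Fin (n - 1) → Fin (r + 1)) : ℤ := ∑ i, ((δ i : ℕ) : ℤ)

/-- `ℓ(δ) = 1 + #{i | δ_i = r}`, the number of blocks. -/
def ellStat (n r : ℕ) (δ : Fin (n - 1) → Fin (r + 1)) : ℕ :=
  1 + (univ.filter (fun i : Fin (n - 1) => (δ i : ℕ) = r)).card

/-- The set of distinct values `a_1 < ⋯ < a_{c(δ)}` appearing in the list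
`0, δ_1, δ_1+δ_2, …, δ_1+⋯+δ_{n-1}`. -/
def distinctVals (n r : ℕ) (δ : Fin (n - 1) → Fin (r + 1)) : Finset ℤ :=
  univ.image (pSum n r δ)

/-- `n_k(δ)`: the number of occurrences of the value `v = a_k` in the above list. -/
def nOcc (n r : ℕ) (δ : Fin (n - 1) → Fin (r + 1)) (v : ℤ) : ℕ :=
  (univ.filter (fun j : Fin n => pSum n r δ j = v)).card

/-- `j` is the first index of its block: `j = 1` or `δ_{j-1} = r`. -/
def blockStart (n r : ℕ) (δ : Fin (n - 1) → Fin (r + 1)) (j : Fin n) : Prop :=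
  ∀ hj : 0 < (j : ℕ), ((δ ⟨(j : ℕ) - 1, by have := j.isLt; omega⟩ : ℕ)) = r

/-- `j` is the first index of its column: `j = 1` or `δ_{j-1} ≠ 0`. -/
def colStart (n r : ℕ) (δ : Fin (n - 1) → Fin (r + 1)) (j : Fin n) : Prop :=
  ∀ hj : 0 < (j : ℕ), ((δ ⟨(j : ℕ) - 1, by have := j.isLt; omega⟩ : ℕ)) ≠ 0

/-- The indices `{j, j+1, …, j'}` form a column of `δ`. -/
def IsColumn (n r : ℕ) (δ : Fin (n - 1) → Fin (r + 1)) (j j' : Fin n) : Prop :=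
  j ≤ j' ∧ colStart n r δ j ∧
  (∀ k : Fin n, j ≤ k → k < j' → ∀ h : (k : ℕ) < n - 1, ((δ ⟨(k : ℕ), h⟩ : ℕ)) = 0) ∧
  (∀ h : (j' : ℕ) < n - 1, ((δ ⟨(j' : ℕ), h⟩ : ℕ)) ≠ 0)

/-- `L_C = Σ_{i=1}^{j-1} max{r − (δ_i + ⋯ + δ_{j−1}), 0}` for the column with first
index `j`. -/
def Lstat (n r : ℕ) (δ : Fin (n - 1) → Fin (r + 1)) (j : Fin n) : ℤ :=
  ∑ i ∈ univ.filter (fun i : Fin n => i < j),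
    max ((r : ℤ) - (pSum n r δ j - pSum n r δ i)) 0

/-- `R_C = Σ_{k=j'+1}^{n} max{r − (δ_{j'} + ⋯ + δ_{k−1}), 0}` for the column with last
index `j'`. -/
def Rstat (n r : ℕ) (δ : Fin (n - 1) → Fin (r + 1)) (j' : Fin n) : ℤ :=
  ∑ k ∈ univ.filter (fun k : Fin n => j' < k),
    max ((r : ℤ) - (pSum n r δ k - pSum n r δ j')) 0

/-- The conditions defining the polytope `P^δ` (real version). -/
def PdeltaCondR (n r : ℕ) (s d1 d2 : ℤ) (δ : Fin (n - 1) → Fin (r + 1))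
    (a b : Fin n → ℝ) : Prop :=
  (∀ h : 0 < n, 0 ≤ a ⟨0, h⟩) ∧
  (∀ p p' : Fin n, blockStart n r δ p → blockStart n r δ p' → p < p' →
      (∀ q : Fin n, p < q → q < p' → ¬ blockStart n r δ q) →
      a p + ((pSum n r δ p' - pSum n r δ p : ℤ) : ℝ) ≤ a p') ∧
  (∀ p : Fin n, blockStart n r δ p → (∀ q : Fin n, p < q → ¬ blockStart n r δ q) →
      a p + ((delTotal n r δ - pSum n r δ p : ℤ) : ℝ) ≤ (d1 : ℝ)) ∧
  (∀ j : Fin n, ¬ blockStart n r δ j →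
      ∀ i : Fin n, blockStart n r δ i → i < j →
        (∀ q : Fin n, blockStart n r δ q → q < j → q ≤ i) →
        a j = a i + ((pSum n r δ j - pSum n r δ i : ℤ) : ℝ)) ∧
  (∀ j j' : Fin n, IsColumn n r δ j j' →
      (((Lstat n r δ j : ℤ) : ℝ) ≤ b j ∧
       (∀ k : Fin n, j ≤ k → k < j' → ∀ h : (k : ℕ) + 1 < n,
          b k + (r : ℝ) ≤ b ⟨(k : ℕ) + 1, h⟩) ∧
       b j' ≤ (d2 : ℝ) + (s : ℝ) * a j - ((Rstat n r δ j' : ℤ) : ℝ)))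

/-- The polytope `P^δ ⊆ ℝ^{2n}`, where a point of `ℝ^{2n}` is a pair of functions
`Fin n → ℝ` (the `a`- and `b`-coordinates). -/
def PdeltaR (n r : ℕ) (s d1 d2 : ℤ) (δ : Fin (n - 1) → Fin (r + 1)) :
    Set ((Fin n → ℝ) × (Fin n → ℝ)) :=
  {p | PdeltaCondR n r s d1 d2 δ p.1 p.2}

/-! ### Ranks in a finite set of indices -/

/-- The rank of `k` with respect to `C`: the number of elements of `C` that are at most `k`. -/
def rk {n : ℕ} (C : Finset (Fin n)) (k : Fin n) : ℕ := (C.filter (· ≤ k)).card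

lemma rk_le_card {n : ℕ} (C : Finset (Fin n)) (k : Fin n) : rk C k ≤ C.card :=
  card_filter_le _ _

lemma rk_mono {n : ℕ} (C : Finset (Fin n)) {i j : Fin n} (h : i ≤ j) : rk C i ≤ rk C j := by
  apply card_le_card
  intro x hx
  simp only [mem_filter] at hx ⊢
  exact ⟨hx.1, hx.2.trans h⟩

lemma rk_lt {n : ℕ} (C : Finset (Fin n)) {i j : Fin n} (h : i < j) (hj : j ∈ C) :
    rk C i < rk C j := by
  apply card_lt_card
  refine ⟨?_, fun hs => ?_⟩
  · intro x hx
    simp only [mem_filter] at hx ⊢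
    exact ⟨hx.1, hx.2.trans h.le⟩
  · have := hs (mem_filter.2 ⟨hj, le_refl j⟩)
    exact absurd (mem_filter.1 this).2 (not_le.2 h)

lemma rk_eq {n : ℕ} (C : Finset (Fin n)) {i j : Fin n} (hij : i ≤ j)
    (h : ∀ q ∈ C, q ≤ j → q ≤ i) : rk C i = rk C j := by
  unfold rk
  congr 1
  ext x
  simp only [mem_filter]
  exact ⟨fun hx => ⟨hx.1, hx.2.trans hij⟩, fun hx => ⟨hx.1, h x hx.1 hx.2⟩⟩

lemma exists_rk_eq {n : ℕ} (C : Finset (Fin n)) (t : ℕ) (h1 : 1 ≤ t) (h2 : t ≤ C.card) :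
    ∃ k ∈ C, rk C k = t := by
  have hmaps : ∀ k ∈ C, rk C k ∈ Icc 1 C.card := by
    intro k hk
    refine mem_Icc.2 ⟨card_pos.2 ⟨k, mem_filter.2 ⟨hk, le_refl k⟩⟩, rk_le_card C k⟩
  have hinj : Set.InjOn (rk C) C := by
    intro i hi j hj hij
    rcases lt_trichotomy i j with h | h | h
    · exact absurd hij (rk_lt C h hj).ne
    · exact h
    · exact absurd hij (rk_lt C h hi).ne'
  obtain ⟨k, hk, hkt⟩ := Finset.surjOn_of_injOn_of_card_le (rk C) hmaps hinj (by simp)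
    (by simpa using (⟨h1, h2⟩ : 1 ≤ t ∧ t ≤ C.card) : t ∈ (↑(Icc 1 C.card) : Set ℕ))
  exact ⟨k, hk, hkt⟩

/-- A down-closed property `Z` on `C` is recovered from the number of elements of `C` having it.
The index `k` need not belong to `C`; the last hypothesis says that if `Z` fails at `k`, it already
fails at some element of `C` that is at most `k`. -/
lemma rk_le_iff {n : ℕ} (C : Finset (Fin n)) (Z : Fin n → Prop) [DecidablePred Z] (k : Fin n)
    (h1 : Z k → ∀ q ∈ C, q ≤ k → Z q) (h2 : ¬ Z k → ∀ q ∈ C, Z q → q ≤ k)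
    (h3 : ¬ Z k → ∃ q ∈ C, q ≤ k ∧ ¬ Z q) :
    rk C k ≤ (C.filter Z).card ↔ Z k := by
  constructor
  · intro h
    by_contra hk
    obtain ⟨q, hq, hqk, hZ⟩ := h3 hk
    refine absurd h (not_le.2 (card_lt_card ⟨?_, fun hs => ?_⟩))
    · intro x hx
      simp only [mem_filter] at hx ⊢
      exact ⟨hx.1, h2 hk x hx.1 hx.2⟩
    · exact hZ (mem_filter.1 (hs (mem_filter.2 ⟨hq, hqk⟩))).2
  · intro h
    apply card_le_card
    intro x hx
    simp only [mem_filter] at hx ⊢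
    exact ⟨hx.1, h1 h x hx.1 hx.2⟩

/-! ### The model polytope -/

/-- The polytope in normalised form. With `x_j = a_j - σ_j` and `y_j = b_j - L_j`: `x` is weakly
increasing with values in `[0, D]` and constant on blocks (the fibres of `rk B`); `y` is weakly
increasing on every column (the fibres of `σ`), with values in `[0, Λ_j]` where
`Λ_j = E + s a_j - W_j`. -/
def model {n : ℕ} (σ L W : Fin n → ℤ) (B : Finset (Fin n)) (D E s : ℤ) :
    Set ((Fin n → ℝ) × (Fin n → ℝ)) :=
  {p | (∀ i j, i ≤ j → p.1 i - σ i ≤ p.1 j - σ j) ∧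
    (∀ i j, rk B i = rk B j → p.1 i - σ i = p.1 j - σ j) ∧
    (∀ j, 0 ≤ p.1 j - σ j) ∧
    (∀ j, p.1 j - σ j ≤ D) ∧
    (∀ i j, i ≤ j → σ i = σ j → p.2 i - L i ≤ p.2 j - L j) ∧
    (∀ j, 0 ≤ p.2 j - L j) ∧
    (∀ j, p.2 j - L j ≤ E + s * p.1 j - W j)}

lemma model_convex {n : ℕ} (σ L W : Fin n → ℤ) (B : Finset (Fin n)) (D E s : ℤ) :
    Convex ℝ (model σ L W B D E s) := by
  rintro p ⟨p1, p2, p3, p4, p5, p6, p7⟩ q ⟨q1, q2, q3, q4, q5, q6, q7⟩ u v hu hv huv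
  obtain rfl : v = 1 - u := by linarith
  refine ⟨fun i j h => ?_, fun i j h => ?_, fun j => ?_, fun j => ?_, fun i j h h' => ?_,
    fun j => ?_, fun j => ?_⟩ <;>
    simp only [Prod.fst_add, Prod.snd_add, Prod.smul_fst, Prod.smul_snd, Pi.add_apply,
      Pi.smul_apply, smul_eq_mul]
  · nlinarith [mul_le_mul_of_nonneg_left (p1 i j h) hu, mul_le_mul_of_nonneg_left (q1 i j h) hv]
  · linear_combination u * p2 i j h + (1 - u) * q2 i j h
  · nlinarith [mul_le_mul_of_nonneg_left (p3 j) hu, mul_le_mul_of_nonneg_left (q3 j) hv]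
  · nlinarith [mul_le_mul_of_nonneg_left (p4 j) hu, mul_le_mul_of_nonneg_left (q4 j) hv]
  · nlinarith [mul_le_mul_of_nonneg_left (p5 i j h h') hu,
      mul_le_mul_of_nonneg_left (q5 i j h h') hv]
  · nlinarith [mul_le_mul_of_nonneg_left (p6 j) hu, mul_le_mul_of_nonneg_left (q6 j) hv]
  · nlinarith [mul_le_mul_of_nonneg_left (p7 j) hu, mul_le_mul_of_nonneg_left (q7 j) hv]

lemma model_compact {n : ℕ} (σ L W : Fin n → ℤ) (B : Finset (Fin n)) (D E s : ℤ) (hs : 0 ≤ s) :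
    IsCompact (model σ L W B D E s) := by
  refine IsCompact.of_isClosed_subset (isCompact_Icc
    (a := ((fun j => (σ j : ℝ), fun j => (L j : ℝ)) : (Fin n → ℝ) × (Fin n → ℝ)))
    (b := (fun j => (σ j + D : ℝ), fun j => (L j + (E + s * (σ j + D) - W j) : ℝ)))) ?_ ?_
  · simp only [model, Set.ofPred_and, Set.ofPred_forall]
    refine IsClosed.inter ?_ <| IsClosed.inter ?_ <| IsClosed.inter ?_ <| IsClosed.inter ?_ <|
      IsClosed.inter ?_ <| IsClosed.inter ?_ ?_ <;>
    repeat refine isClosed_iInter fun _ => ?_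
    all_goals first
      | exact isClosed_le (by fun_prop) (by fun_prop)
      | exact isClosed_eq (by fun_prop) (by fun_prop)
  · rintro p ⟨-, -, p3, p4, -, p6, p7⟩
    have hs' : (0 : ℝ) ≤ s := by exact_mod_cast hs
    refine ⟨⟨fun j => ?_, fun j => ?_⟩, ⟨fun j => ?_, fun j => ?_⟩⟩
    · simpa using p3 j
    · simpa using p6 j
    · have := p4 j
      simp only; linarith
    · have := p7 j
      have h := mul_le_mul_of_nonneg_left (p4 j) hs'
      simp only; linarith

/-! ### Extreme points of the model polytope -/

/-- `τ ↦ τ ± τ (D - τ) / D` are increasing self-maps of `[0, D]` fixing exactly the endpoints; this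
is the minus case. -/
lemma shrink_bounds {D u v : ℝ} (hD : 0 < D) (hu : 0 ≤ u) (huv : u ≤ v) (hv : v ≤ D) :
    0 ≤ u - u * (D - u) / D ∧ u - u * (D - u) / D ≤ v - v * (D - v) / D ∧
      v - v * (D - v) / D ≤ D := by
  have e : ∀ w : ℝ, w - w * (D - w) / D = w ^ 2 / D := fun w => by field_simp; ring
  rw [e, e]
  refine ⟨by positivity, by gcongr, ?_⟩
  rw [div_le_iff₀ hD]
  nlinarith

lemma grow_bounds {D u v : ℝ} (hD : 0 < D) (hu : 0 ≤ u) (huv : u ≤ v) (hv : v ≤ D) :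
    0 ≤ u + u * (D - u) / D ∧ u + u * (D - u) / D ≤ v + v * (D - v) / D ∧
      v + v * (D - v) / D ≤ D := by
  have h := shrink_bounds hD (sub_nonneg.2 hv) (sub_le_sub_left huv D) (by linarith)
  have e : ∀ w : ℝ, (D - w) - (D - w) * (D - (D - w)) / D = D - (w + w * (D - w) / D) :=
    fun w => by ring
  rw [e, e] at h
  exact ⟨by have : 0 ≤ u * (D - u) / D := div_nonneg (mul_nonneg hu (by linarith)) hD.le
            linarith, by linarith [h.2.1], by linarith [h.1]⟩

/-- An extreme point cannot be the midpoint of `p + w` and `p - w` unless `w = 0`. -/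
lemma extreme_no_perturb {V : Type*} [AddCommGroup V] [Module ℝ V] {A : Set V} {p w : V}
    (hp : p ∈ Set.extremePoints ℝ A) (h1 : p + w ∈ A) (h2 : p - w ∈ A) : w = 0 := by
  have := hp.2 h1 h2 ⟨1 / 2, 1 / 2, by norm_num, by norm_num, by norm_num, by module⟩
  simpa using this

/-- A point is extreme iff every `x_j` and every `y_j` lies at an end of its interval. -/
lemma mem_extreme_iff {n : ℕ} (σ L W : Fin n → ℤ) (B : Finset (Fin n)) (D E s : ℤ) (hs : 0 ≤ s)
    (hD : 0 < D) (hΛ : ∀ k, 0 < E + s * σ k - W k) (hσB : ∀ i j, σ i = σ j → rk B i = rk B j)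
    (hσW : ∀ i j, σ i = σ j → W i = W j) (p : (Fin n → ℝ) × (Fin n → ℝ)) :
    p ∈ Set.extremePoints ℝ (model σ L W B D E s) ↔ p ∈ model σ L W B D E s ∧
      (∀ j, p.1 j - σ j = 0 ∨ p.1 j - σ j = D) ∧
      (∀ j, p.2 j - L j = 0 ∨ p.2 j - L j = E + s * p.1 j - W j) := by
  have hs' : (0 : ℝ) ≤ s := by exact_mod_cast hs
  have hD' : (0 : ℝ) < D := by exact_mod_cast hD
  have hΛ' : ∀ k, (0 : ℝ) < E + s * σ k - W k := fun k => by exact_mod_cast hΛ k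
  have hpos : ∀ k (t : ℝ), 0 ≤ t - σ k → 0 < E + s * t - W k := fun k t ht => by
    nlinarith [hΛ' k, mul_nonneg hs' ht]
  constructor
  · intro hp
    have hpm := hp.1
    obtain ⟨p1, p2, p3, p4, p5, p6, p7⟩ := hpm
    -- `x` and hence the interval length `Λ` are constant on columns.
    have hx : ∀ i j, σ i = σ j → p.1 i = p.1 j := fun i j h => by
      have := p2 i j (hσB i j h); rw [h] at this; linarith
    have hΛc : ∀ i j, σ i = σ j → (E + s * p.1 i - W i : ℝ) = E + s * p.1 j - W j :=
      fun i j h => by rw [hx i j h, hσW i j h]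
    refine ⟨hp.1, ?_, ?_⟩
    · -- Move `x` along the endpoint-fixing monotone maps, rescaling `y` with `Λ`.
      have hw := extreme_no_perturb (w := (
        fun j => (p.1 j - σ j) * (D - (p.1 j - σ j)) / D,
        fun j => (p.2 j - L j) * (s * ((p.1 j - σ j) * (D - (p.1 j - σ j)) / D) /
          (E + s * p.1 j - W j)))) hp ?_ ?_
      · intro j
        have := congrFun (congrArg Prod.fst hw) j
        simp only [Prod.fst_zero, Pi.zero_apply, div_eq_zero_iff, mul_eq_zero] at this
        rcases this with (h | h) | h
        · exact Or.inl h
        · exact Or.inr (by linarith)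
        · exact absurd h hD'.ne'
      · have e : ∀ j, p.2 j + (p.2 j - L j) * (s * ((p.1 j - σ j) * (D - (p.1 j - σ j)) / D) /
          (E + s * p.1 j - W j)) - L j = (p.2 j - L j) * ((E + s * (p.1 j +
            (p.1 j - σ j) * (D - (p.1 j - σ j)) / D) - W j) / (E + s * p.1 j - W j)) := by
          intro j
          have := (hpos j _ (p3 j)).ne'
          field_simp
          ring
        have hq : ∀ j, 0 ≤ (E + s * (p.1 j +
            (p.1 j - σ j) * (D - (p.1 j - σ j)) / D) - W j) / (E + s * p.1 j - W j) := by
          intro j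
          refine div_nonneg (hpos j _ ?_).le (hpos j _ (p3 j)).le
          have := (grow_bounds hD' (p3 j) le_rfl (p4 j)).1
          linarith
        refine ⟨fun i j h => ?_, fun i j h => ?_, fun j => ?_, fun j => ?_, fun i j h h' => ?_,
          fun j => ?_, fun j => ?_⟩ <;>
          simp only [Prod.fst_add, Prod.snd_add, Pi.add_apply]
        · linarith [(grow_bounds hD' (p3 i) (p1 i j h) (p4 j)).2.1]
        · rw [p2 i j h]; linarith [p2 i j h]
        · linarith [(grow_bounds hD' (p3 j) le_rfl (p4 j)).1]
        · linarith [(grow_bounds hD' (p3 j) le_rfl (p4 j)).2.2]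
        · rw [e, e, hx i j h', hσW i j h', h']
          exact mul_le_mul_of_nonneg_right (p5 i j h h') (hq j)
        · rw [e]; exact mul_nonneg (p6 j) (hq j)
        · rw [e]
          refine (mul_le_mul_of_nonneg_right (p7 j) (hq j)).trans_eq ?_
          have := (hpos j _ (p3 j)).ne'
          field_simp
      · have e : ∀ j, p.2 j - (p.2 j - L j) * (s * ((p.1 j - σ j) * (D - (p.1 j - σ j)) / D) /
          (E + s * p.1 j - W j)) - L j = (p.2 j - L j) * ((E + s * (p.1 j -
            (p.1 j - σ j) * (D - (p.1 j - σ j)) / D) - W j) / (E + s * p.1 j - W j)) := by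
          intro j
          have := (hpos j _ (p3 j)).ne'
          field_simp
          ring
        have hq : ∀ j, 0 ≤ (E + s * (p.1 j -
            (p.1 j - σ j) * (D - (p.1 j - σ j)) / D) - W j) / (E + s * p.1 j - W j) := by
          intro j
          refine div_nonneg (hpos j _ ?_).le (hpos j _ (p3 j)).le
          have := (shrink_bounds hD' (p3 j) le_rfl (p4 j)).1
          linarith
        refine ⟨fun i j h => ?_, fun i j h => ?_, fun j => ?_, fun j => ?_, fun i j h h' => ?_,
          fun j => ?_, fun j => ?_⟩ <;>
          simp only [Prod.fst_sub, Prod.snd_sub, Pi.sub_apply]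
        · linarith [(shrink_bounds hD' (p3 i) (p1 i j h) (p4 j)).2.1]
        · rw [p2 i j h]; linarith [p2 i j h]
        · linarith [(shrink_bounds hD' (p3 j) le_rfl (p4 j)).1]
        · linarith [(shrink_bounds hD' (p3 j) le_rfl (p4 j)).2.2]
        · rw [e, e, hx i j h', hσW i j h', h']
          exact mul_le_mul_of_nonneg_right (p5 i j h h') (hq j)
        · rw [e]; exact mul_nonneg (p6 j) (hq j)
        · rw [e]
          refine (mul_le_mul_of_nonneg_right (p7 j) (hq j)).trans_eq ?_
          have := (hpos j _ (p3 j)).ne'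
          field_simp
    · -- Keep `x` and move `y` along the endpoint-fixing monotone maps of `[0, Λ]`.
      have hw := extreme_no_perturb (w := ((0 : Fin n → ℝ),
        fun j => (p.2 j - L j) * ((E + s * p.1 j - W j) - (p.2 j - L j)) /
          (E + s * p.1 j - W j))) hp ?_ ?_
      · intro j
        have := congrFun (congrArg Prod.snd hw) j
        simp only [Prod.snd_zero, Pi.zero_apply, div_eq_zero_iff, mul_eq_zero] at this
        rcases this with (h | h) | h
        · exact Or.inl h
        · exact Or.inr (by linarith)
        · exact absurd h (hpos j _ (p3 j)).ne'
      · refine ⟨fun i j h => ?_, fun i j h => ?_, fun j => ?_, fun j => ?_, fun i j h h' => ?_,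
          fun j => ?_, fun j => ?_⟩ <;>
          simp only [Prod.fst_add, Prod.snd_add, Pi.add_apply, Pi.zero_apply, add_zero]
        · exact p1 i j h
        · exact p2 i j h
        · exact p3 j
        · exact p4 j
        · rw [hΛc i j h']
          linarith [(grow_bounds (hpos j _ (p3 j)) (p6 i) (p5 i j h h') (p7 j)).2.1]
        · linarith [(grow_bounds (hpos j _ (p3 j)) (p6 j) le_rfl (p7 j)).1]
        · linarith [(grow_bounds (hpos j _ (p3 j)) (p6 j) le_rfl (p7 j)).2.2]
      · refine ⟨fun i j h => ?_, fun i j h => ?_, fun j => ?_, fun j => ?_, fun i j h h' => ?_,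
          fun j => ?_, fun j => ?_⟩ <;>
          simp only [Prod.fst_sub, Prod.snd_sub, Pi.sub_apply, Pi.zero_apply, sub_zero]
        · exact p1 i j h
        · exact p2 i j h
        · exact p3 j
        · exact p4 j
        · rw [hΛc i j h']
          linarith [(shrink_bounds (hpos j _ (p3 j)) (p6 i) (p5 i j h h') (p7 j)).2.1]
        · linarith [(shrink_bounds (hpos j _ (p3 j)) (p6 j) le_rfl (p7 j)).1]
        · linarith [(shrink_bounds (hpos j _ (p3 j)) (p6 j) le_rfl (p7 j)).2.2]
  · rintro ⟨hp, hx, hy⟩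
    refine ⟨hp, ?_⟩
    rintro q ⟨-, -, q3, q4, -, q6, q7⟩ q' ⟨-, -, q3', q4', -, q6', q7'⟩ ⟨u, v, hu, hv, huv, rfl⟩
    obtain rfl : v = 1 - u := by linarith
    simp only [Prod.fst_add, Prod.snd_add, Prod.smul_fst, Prod.smul_snd, Pi.add_apply,
      Pi.smul_apply, smul_eq_mul] at hx hy
    -- A convex combination at the lower (upper) end of an interval has both parts there.
    have key : ∀ w w' c : ℝ, c ≤ w → c ≤ w' → u * w + (1 - u) * w' = c → w = c ∧ w' = c := by
      intro w w' c h h' he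
      constructor <;> nlinarith [mul_nonneg hu.le (sub_nonneg.2 h), mul_nonneg hv.le (sub_nonneg.2 h')]
    have hqx : ∀ j, q.1 j = q'.1 j := by
      intro j
      rcases hx j with h | h
      · obtain ⟨h1, h2⟩ := key (q.1 j - σ j) (q'.1 j - σ j) 0 (q3 j) (q3' j) (by linarith)
        linarith
      · obtain ⟨h1, h2⟩ := key (-(q.1 j - σ j)) (-(q'.1 j - σ j)) (-D) (by linarith [q4 j])
          (by linarith [q4' j]) (by linarith)
        linarith
    have hqy : ∀ j, q.2 j = q'.2 j := by
      intro j
      have hxj := hqx j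
      have h7 := q7 j
      have h7' := q7' j
      rw [← hxj] at h7'
      rcases hy j with h | h
      · obtain ⟨h1, h2⟩ := key (q.2 j - L j) (q'.2 j - L j) 0 (q6 j) (q6' j) (by linarith)
        linarith
      · rw [← hxj] at h
        obtain ⟨h1, h2⟩ := key (-(q.2 j - L j)) (-(q'.2 j - L j)) (-(E + s * q.1 j - W j))
          (by linarith) (by linarith) (by linarith)
        linarith
    have hqq : q = q' := Prod.ext (funext hqx) (funext hqy)
    subst hqq
    rw [← add_smul]; simp

/-! ### Counting the extreme points -/

/-- The column on which `σ` takes the value `v`. -/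
def col {n : ℕ} (σ : Fin n → ℤ) (v : ℤ) : Finset (Fin n) := univ.filter (fun j => σ j = v)

/-- The vertex with `x = 0` on the first `t` blocks and `x = D` on the others, and with `y = 0` on
the first `m v` members of the column with value `v` and `y = Λ` on its other members. -/
def vertex {n : ℕ} (σ L W : Fin n → ℤ) (B : Finset (Fin n)) (D E s : ℤ)
    (c : ℕ × (∀ v ∈ univ.image σ, ℕ)) : (Fin n → ℝ) × (Fin n → ℝ) :=
  (fun j => σ j + if rk B j ≤ c.1 then (0 : ℝ) else D,
   fun j => L j + if rk (col σ (σ j)) j ≤ c.2 (σ j) (mem_image_of_mem σ (mem_univ j)) then (0 : ℝ)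
    else E + s * (σ j + if rk B j ≤ c.1 then (0 : ℝ) else D) - W j)

lemma vertex_mem {n : ℕ} (σ L W : Fin n → ℤ) (B : Finset (Fin n)) (D E s : ℤ) (hs : 0 ≤ s)
    (hD : 0 < D) (hΛ : ∀ k, 0 < E + s * σ k - W k) (hσB : ∀ i j, σ i = σ j → rk B i = rk B j)
    (hσW : ∀ i j, σ i = σ j → W i = W j) (c : ℕ × (∀ v ∈ univ.image σ, ℕ)) :
    vertex σ L W B D E s c ∈ model σ L W B D E s := by
  have hs' : (0 : ℝ) ≤ s := by exact_mod_cast hs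
  have hD' : (0 : ℝ) < D := by exact_mod_cast hD
  have hΛ' : ∀ k, (0 : ℝ) < E + s * σ k - W k := fun k => by exact_mod_cast hΛ k
  have hx : ∀ j, (0 : ℝ) ≤ if rk B j ≤ c.1 then (0 : ℝ) else D := fun j => by
    split_ifs <;> linarith
  have hpos : ∀ j, (0 : ℝ) < E + s * (σ j + if rk B j ≤ c.1 then (0 : ℝ) else D) - W j :=
    fun j => by nlinarith [hΛ' j, mul_nonneg hs' (hx j)]
  refine ⟨fun i j h => ?_, fun i j h => ?_, fun j => ?_, fun j => ?_, fun i j h h' => ?_,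
    fun j => ?_, fun j => ?_⟩ <;> simp only [vertex, add_sub_cancel_left]
  · have := rk_mono B h
    split_ifs <;> first | omega | linarith
  · rw [h]
  · exact hx j
  · split_ifs <;> linarith
  · have hc : c.2 (σ i) (mem_image_of_mem σ (mem_univ i)) =
        c.2 (σ j) (mem_image_of_mem σ (mem_univ j)) := by
      have hg : ∀ v w (hv : v ∈ univ.image σ) (hw : w ∈ univ.image σ), v = w →
          c.2 v hv = c.2 w hw := by
        rintro v w hv hw rfl
        rfl
      exact hg _ _ _ _ h'
    rw [hc, hσB i j h', hσW i j h', h']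
    have := rk_mono (col σ (σ j)) h
    have hp := hpos j
    generalize (E + s * (σ j + if rk B j ≤ c.1 then (0 : ℝ) else D) - W j : ℝ) = Λ at hp ⊢
    split_ifs <;> first | omega | linarith
  · have := hpos j
    split_ifs at * <;> linarith
  · have := hpos j
    split_ifs at * <;> linarith

lemma extreme_ncard {n : ℕ} (σ L W : Fin n → ℤ) (B : Finset (Fin n)) (D E s : ℤ) (hs : 0 ≤ s)
    (hD : 0 < D) (hΛ : ∀ k, 0 < E + s * σ k - W k) (hσB : ∀ i j, σ i = σ j → rk B i = rk B j)
    (hσW : ∀ i j, σ i = σ j → W i = W j)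
    (hB : ∀ k, ∃ i ∈ B, i ≤ k ∧ rk B i = rk B k) :
    (Set.extremePoints ℝ (model σ L W B D E s)).ncard =
      (B.card + 1) * ∏ v ∈ univ.image σ, ((col σ v).card + 1) := by
  have hs' : (0 : ℝ) ≤ s := by exact_mod_cast hs
  have hD' : (0 : ℝ) < D := by exact_mod_cast hD
  have hΛ' : ∀ k, (0 : ℝ) < E + s * σ k - W k := fun k => by exact_mod_cast hΛ k
  set I := range (B.card + 1) ×ˢ (univ.image σ).pi (fun v => range ((col σ v).card + 1)) with hI
  have hcard : I.card = (B.card + 1) * ∏ v ∈ univ.image σ, ((col σ v).card + 1) := by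
    simp [hI, card_product, card_pi]
  rw [← hcard, ← Set.ncard_coe_finset]
  have himg : Set.extremePoints ℝ (model σ L W B D E s) =
      Set.image (vertex σ L W B D E s) (I : Set _) := by
    ext p
    rw [mem_extreme_iff σ L W B D E s hs hD hΛ hσB hσW]
    constructor
    · rintro ⟨⟨p1, p2, p3, p4, p5, p6, p7⟩, hx, hy⟩
      classical
      refine ⟨((B.filter (fun j => p.1 j - σ j = 0)).card,
        fun v _ => ((col σ v).filter (fun j => p.2 j - L j = 0)).card), ?_, ?_⟩
      · simp only [hI, coe_product, Set.mem_prod, mem_coe, mem_range, mem_pi, Nat.lt_succ_iff]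
        exact ⟨card_filter_le _ _, fun v _ => card_filter_le _ _⟩
      · have e1 : ∀ k, rk B k ≤ (B.filter (fun j => p.1 j - σ j = 0)).card ↔
            p.1 k - σ k = 0 := by
          intro k
          refine rk_le_iff B (fun j => p.1 j - σ j = 0) k ?_ ?_ ?_
          · intro h q _ hqk
            exact le_antisymm (by linarith [p1 q k hqk]) (p3 q)
          · intro h q _ hq
            by_contra hqk
            exact h (le_antisymm (by linarith [p1 k q (not_le.1 hqk).le]) (p3 k))
          · intro h
            obtain ⟨i, hi, hik, hr⟩ := hB k
            exact ⟨i, hi, hik, by rw [p2 i k hr]; exact h⟩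
        have e2 : ∀ k, rk (col σ (σ k)) k ≤
            ((col σ (σ k)).filter (fun j => p.2 j - L j = 0)).card ↔ p.2 k - L k = 0 := by
          intro k
          refine rk_le_iff (col σ (σ k)) (fun j => p.2 j - L j = 0) k ?_ ?_ ?_
          · intro h q hq hqk
            have hq : σ q = σ k := by simpa [col] using hq
            exact le_antisymm (by linarith [p5 q k hqk hq]) (p6 q)
          · intro h q hq hq0
            have hq : σ q = σ k := by simpa [col] using hq
            by_contra hqk
            exact h (le_antisymm (by linarith [p5 k q (not_le.1 hqk).le hq.symm]) (p6 k))
          · intro h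
            exact ⟨k, by simp [col], le_rfl, h⟩
        have f1 : ∀ j, (σ j + if rk B j ≤ (B.filter (fun j => p.1 j - σ j = 0)).card
            then (0 : ℝ) else D) = p.1 j := by
          intro j
          rw [if_congr (e1 j) rfl rfl]
          split_ifs with h
          · linarith
          · linarith [(hx j).resolve_left h]
        refine Prod.ext (funext f1) (funext fun j => ?_)
        simp only [vertex]
        rw [f1, if_congr (e2 j) rfl rfl]
        split_ifs with h
        · linarith
        · linarith [(hy j).resolve_left h]
    · rintro ⟨c, -, rfl⟩
      refine ⟨vertex_mem σ L W B D E s hs hD hΛ hσB hσW c, fun j => ?_, fun j => ?_⟩ <;>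
        simp only [vertex, add_sub_cancel_left]
      · split_ifs <;> simp
      · split_ifs <;> simp
  rw [himg]
  refine Set.InjOn.ncard_image ?_
  rintro ⟨t, m⟩ hc ⟨t', m'⟩ hc' heq
  simp only [hI, coe_product, Set.mem_prod, mem_coe, mem_range, mem_pi, Nat.lt_succ_iff] at hc hc'
  have h1 : ∀ j, rk B j ≤ t ↔ rk B j ≤ t' := by
    intro j
    have h := congrFun (congrArg Prod.fst heq) j
    simp only [vertex] at h
    split_ifs at h <;> first | tauto | (exfalso; linarith)
  have ht : t = t' := by
    rcases lt_trichotomy t t' with h | h | h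
    · obtain ⟨k, -, hk⟩ := exists_rk_eq B t' (by omega) hc'.1
      have := h1 k
      omega
    · exact h
    · obtain ⟨k, -, hk⟩ := exists_rk_eq B t (by omega) hc.1
      have := h1 k
      omega
  subst ht
  have h2 : ∀ j, rk (col σ (σ j)) j ≤ m (σ j) (mem_image_of_mem σ (mem_univ j)) ↔
      rk (col σ (σ j)) j ≤ m' (σ j) (mem_image_of_mem σ (mem_univ j)) := by
    intro j
    have h := congrFun (congrArg Prod.snd heq) j
    simp only [vertex] at h
    have hx : (0 : ℝ) ≤ if rk B j ≤ t then (0 : ℝ) else D := by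
      split_ifs <;> linarith
    have hp : (0 : ℝ) < E + s * (σ j + if rk B j ≤ t then (0 : ℝ) else D) - W j := by
      nlinarith [hΛ' j, mul_nonneg hs' hx]
    generalize (E + s * (σ j + if rk B j ≤ t then (0 : ℝ) else D) - W j : ℝ) = Λ at h hp
    split_ifs at h <;> first | tauto | (exfalso; linarith)
  have hm : m = m' := by
    funext v hv
    have hcv := hc.2 v hv
    have hcv' := hc'.2 v hv
    have hmem : ∀ k ∈ col σ v, (rk (col σ v) k ≤ m v hv ↔ rk (col σ v) k ≤ m' v hv) := by
      intro k hk
      obtain rfl : σ k = v := by simpa [col] using hk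
      exact h2 k
    rcases lt_trichotomy (m v hv) (m' v hv) with h | h | h
    · obtain ⟨k, hk, hkt⟩ := exists_rk_eq (col σ v) (m' v hv) (by omega) hcv'
      have := hmem k hk
      omega
    · exact h
    · obtain ⟨k, hk, hkt⟩ := exists_rk_eq (col σ v) (m v hv) (by omega) hcv
      have := hmem k hk
      omega
  rw [hm]

/-! ### Partial sums, blocks and columns of `δ` -/

/-- If `f` weakly increases at each step from `i` to `j`, then `f i ≤ f j`. -/
lemma chain {n : ℕ} {α : Type*} [Preorder α] (f : Fin n → α) {i j : Fin n} (hij : i ≤ j)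
    (h : ∀ (k : ℕ) (hk : k + 1 < n), (i : ℕ) ≤ k → k < j → f ⟨k, by omega⟩ ≤ f ⟨k + 1, hk⟩) :
    f i ≤ f j := by
  obtain ⟨i, hi⟩ := i
  obtain ⟨j, hj⟩ := j
  replace hij : i ≤ j := hij
  induction j, hij using Nat.le_induction with
  | base => exact le_rfl
  | succ j hij ih =>
    exact (ih (by omega) fun k hk h1 h2 => h k hk h1 (by simp at h2 ⊢; omega)).trans
      (h j hj hij (by simp))

lemma pSum_succ (n r : ℕ) (δ : Fin (n - 1) → Fin (r + 1)) (k : ℕ) (hk : k + 1 < n) :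
    pSum n r δ ⟨k + 1, hk⟩ = pSum n r δ ⟨k, by omega⟩ + (δ ⟨k, by omega⟩ : ℕ) := by
  unfold pSum
  have : univ.filter (fun i : Fin (n - 1) => (i : ℕ) < k + 1) =
      insert ⟨k, by omega⟩ (univ.filter (fun i : Fin (n - 1) => (i : ℕ) < k)) := by
    ext i
    simp only [mem_filter, mem_univ, true_and, mem_insert, Fin.ext_iff]
    omega
  simp only [this]
  rw [sum_insert (by simp), add_comm]

lemma pSum_mono (n r : ℕ) (δ : Fin (n - 1) → Fin (r + 1)) {i j : Fin n} (hij : i ≤ j) :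
    pSum n r δ i ≤ pSum n r δ j := by
  refine chain (pSum n r δ) hij fun k hk _ _ => ?_
  rw [pSum_succ]
  omega

lemma pSum_zero (n r : ℕ) (δ : Fin (n - 1) → Fin (r + 1)) (h : 0 < n) :
    pSum n r δ ⟨0, h⟩ = 0 := by
  simp [pSum]

lemma pSum_nonneg (n r : ℕ) (δ : Fin (n - 1) → Fin (r + 1)) (j : Fin n) :
    0 ≤ pSum n r δ j :=
  sum_nonneg fun _ _ => by omega

lemma delta_eq_zero (n r : ℕ) (δ : Fin (n - 1) → Fin (r + 1)) {i j : Fin n}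
    (h : pSum n r δ i = pSum n r δ j) (k : ℕ) (hk : k < n - 1) (hik : (i : ℕ) ≤ k)
    (hkj : k < j) : (δ ⟨k, hk⟩ : ℕ) = 0 := by
  have h1 := pSum_mono n r δ (i := i) (j := ⟨k, by omega⟩) hik
  have h2 := pSum_mono n r δ (i := ⟨k + 1, by omega⟩) (j := j) hkj
  have h3 := pSum_succ n r δ k (by omega)
  omega

lemma delTotal_le (n r : ℕ) (hn : 1 ≤ n) (δ : Fin (n - 1) → Fin (r + 1)) :
    delTotal n r δ ≤ r * ((n : ℤ) - 1) := by
  unfold delTotal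
  have := sum_le_card_nsmul (univ : Finset (Fin (n - 1))) (fun i => ((δ i : ℕ) : ℤ)) r
    fun i _ => by have := (δ i).isLt; omega
  simp only [card_univ, Fintype.card_fin, nsmul_eq_mul] at this
  push_cast [Nat.cast_sub hn] at this
  linarith

open Classical in
/-- The set `I` of smallest indices of the blocks. -/
def blockSet (n r : ℕ) (δ : Fin (n - 1) → Fin (r + 1)) : Finset (Fin n) :=
  univ.filter (blockStart n r δ)

lemma mem_blockSet {n r : ℕ} {δ : Fin (n - 1) → Fin (r + 1)} {j : Fin n} :
    j ∈ blockSet n r δ ↔ blockStart n r δ j := by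
  simp [blockSet]

lemma card_blockSet (n r : ℕ) (hn : 1 ≤ n) (δ : Fin (n - 1) → Fin (r + 1)) :
    (blockSet n r δ).card = ellStat n r δ := by
  classical
  obtain ⟨m, rfl⟩ : ∃ m, n = m + 1 := ⟨n - 1, by omega⟩
  have h0 : blockStart (m + 1) r δ 0 := fun h => absurd h (by simp)
  have hs : ∀ i : Fin m, blockStart (m + 1) r δ i.succ ↔ (δ i : ℕ) = r :=
    fun i => ⟨fun h => h (by simp), fun h _ => h⟩
  unfold ellStat
  have e : blockSet (m + 1) r δ = univ.filter (blockStart (m + 1) r δ) := by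
    ext j; simp [mem_blockSet]
  rw [e, card_filter, Fin.sum_univ_succ, if_pos h0, card_filter]
  simp only [hs]
  rfl

/-- The block start of the block containing `k`. -/
lemma exists_block (n r : ℕ) (δ : Fin (n - 1) → Fin (r + 1)) (k : Fin n) :
    ∃ i ≤ k, blockStart n r δ i ∧ ∀ q, blockStart n r δ q → q ≤ k → q ≤ i := by
  have hne : ((blockSet n r δ).filter (· ≤ k)).Nonempty :=
    ⟨⟨0, k.pos⟩, mem_filter.2 ⟨mem_blockSet.2 fun h => absurd h (by simp), Nat.zero_le _⟩⟩
  have hm := mem_filter.1 (max'_mem _ hne)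
  exact ⟨_, hm.2, mem_blockSet.1 hm.1, fun q hq hqk =>
    le_max' _ q (mem_filter.2 ⟨mem_blockSet.2 hq, hqk⟩)⟩

/-- A column lies inside a single block, since `r > 0`. -/
lemma rk_eq_of_pSum_eq (n r : ℕ) (hr : 1 ≤ r) (δ : Fin (n - 1) → Fin (r + 1)) (i j : Fin n)
    (h : pSum n r δ i = pSum n r δ j) : rk (blockSet n r δ) i = rk (blockSet n r δ) j := by
  wlog hij : i ≤ j generalizing i j
  · exact (this j i h.symm (not_le.1 hij).le).symm
  refine rk_eq _ hij fun q hq hqj => ?_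
  by_contra hqi
  have hqi : (i : ℕ) < q := not_le.1 hqi
  have hqj : (q : ℕ) ≤ j := hqj
  have h1 := mem_blockSet.1 hq (by omega)
  have h2 := delta_eq_zero n r δ h (q - 1) (by omega) (by omega) (by omega)
  omega

/-- The first and last index of the column containing `k`. -/
lemma exists_column (n r : ℕ) (δ : Fin (n - 1) → Fin (r + 1)) (k : Fin n) :
    ∃ j j', j ≤ k ∧ k ≤ j' ∧ pSum n r δ j = pSum n r δ k ∧ pSum n r δ j' = pSum n r δ k ∧
      IsColumn n r δ j j' := by
  have hne : (col (pSum n r δ) (pSum n r δ k)).Nonempty := ⟨k, by simp [col]⟩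
  have hk : k ∈ col (pSum n r δ) (pSum n r δ k) := by simp [col]
  obtain ⟨j, hj⟩ : ∃ j, j = (col (pSum n r δ) (pSum n r δ k)).min' hne := ⟨_, rfl⟩
  obtain ⟨j', hj'⟩ : ∃ j, j = (col (pSum n r δ) (pSum n r δ k)).max' hne := ⟨_, rfl⟩
  have hjm : pSum n r δ j = pSum n r δ k := by
    have := min'_mem _ hne
    rw [← hj] at this
    simpa [col] using this
  have hjm' : pSum n r δ j' = pSum n r δ k := by
    have := max'_mem _ hne
    rw [← hj'] at this
    simpa [col] using this
  have hjk : j ≤ k := hj ▸ min'_le _ k hk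
  have hkj' : k ≤ j' := hj' ▸ le_max' _ k hk
  refine ⟨j, j', hjk, hkj', hjm, hjm', hjk.trans hkj', ?_, ?_, ?_⟩
  · intro hpos h0
    have h1 := pSum_succ n r δ (j - 1) (by omega)
    have e : (⟨(j : ℕ) - 1 + 1, by omega⟩ : Fin n) = j := by
      ext; simp; omega
    rw [e, h0] at h1
    have h2 : j ≤ (⟨(j : ℕ) - 1, by omega⟩ : Fin n) := by
      conv_lhs => rw [hj]
      refine min'_le _ _ ?_
      simp only [col, mem_filter, mem_univ, true_and]
      omega
    have h2 : (j : ℕ) ≤ (j : ℕ) - 1 := h2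
    omega
  · intro q hjq hqj' h
    exact delta_eq_zero n r δ (hjm.trans hjm'.symm) q h hjq hqj'
  · intro h h0
    have h1 := pSum_succ n r δ j' (by omega)
    rw [h0] at h1
    have h2 : (⟨(j' : ℕ) + 1, by omega⟩ : Fin n) ≤ j' := by
      conv_rhs => rw [hj']
      refine le_max' _ _ ?_
      simp only [col, mem_filter, mem_univ, true_and]
      rw [h1, ← hjm']
      simp
    have h2 : (j' : ℕ) + 1 ≤ j' := h2
    omega

lemma Lstat_succ (n r : ℕ) (δ : Fin (n - 1) → Fin (r + 1)) (k : ℕ) (hk : k + 1 < n)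
    (h : (δ ⟨k, by omega⟩ : ℕ) = 0) :
    Lstat n r δ ⟨k + 1, hk⟩ = Lstat n r δ ⟨k, by omega⟩ + r := by
  have hp := pSum_succ n r δ k hk
  rw [h] at hp
  have : univ.filter (fun i : Fin n => i < ⟨k + 1, hk⟩) =
      insert ⟨k, by omega⟩ (univ.filter (fun i : Fin n => i < ⟨k, by omega⟩)) := by
    ext i
    simp only [mem_filter, mem_univ, true_and, mem_insert, Fin.ext_iff, Fin.lt_def]
    omega
  unfold Lstat
  rw [this, sum_insert (by simp), hp]
  simp [add_comm]

/-- `L_k + R_k`, computed with the formulas for `L` and `R` at an arbitrary index `k`, is a sum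
over all indices that only involves the value of the partial sum at `k`. -/
lemma LR_sum (n r : ℕ) (δ : Fin (n - 1) → Fin (r + 1)) (k : Fin n) :
    Lstat n r δ k + Rstat n r δ k + r =
      ∑ i, max ((r : ℤ) - |pSum n r δ k - pSum n r δ i|) 0 := by
  rw [← sum_filter_add_sum_filter_not univ (fun i => i < k)]
  have : univ.filter (fun i : Fin n => ¬ i < k) = insert k (univ.filter (fun i => k < i)) := by
    ext i
    simp only [mem_filter, mem_univ, true_and, mem_insert, Fin.ext_iff, Fin.lt_def]
    omega
  rw [this, sum_insert (by simp)]
  have e1 : Lstat n r δ k = ∑ i ∈ univ.filter (fun i => i < k),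
      max ((r : ℤ) - |pSum n r δ k - pSum n r δ i|) 0 := by
    refine sum_congr rfl fun i hi => ?_
    rw [abs_of_nonneg (sub_nonneg.2 (pSum_mono n r δ (mem_filter.1 hi).2.le))]
  have e2 : Rstat n r δ k = ∑ i ∈ univ.filter (fun i => k < i),
      max ((r : ℤ) - |pSum n r δ k - pSum n r δ i|) 0 := by
    refine sum_congr rfl fun i hi => ?_
    rw [abs_sub_comm, abs_of_nonneg (sub_nonneg.2 (pSum_mono n r δ (mem_filter.1 hi).2.le))]
  rw [← e1, ← e2]
  simp
  ring

lemma LR_congr (n r : ℕ) (δ : Fin (n - 1) → Fin (r + 1)) (i j : Fin n)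
    (h : pSum n r δ i = pSum n r δ j) :
    Lstat n r δ i + Rstat n r δ i = Lstat n r δ j + Rstat n r δ j := by
  have h1 := LR_sum n r δ i
  rw [h, ← LR_sum n r δ j] at h1
  omega

lemma LR_le (n r : ℕ) (δ : Fin (n - 1) → Fin (r + 1)) (k : Fin n) :
    Lstat n r δ k + Rstat n r δ k ≤ r * ((n : ℤ) - 1) := by
  have h := LR_sum n r δ k
  have h2 := sum_le_card_nsmul univ
    (fun i => max ((r : ℤ) - |pSum n r δ k - pSum n r δ i|) 0) r fun i _ => by
      have := abs_nonneg (pSum n r δ k - pSum n r δ i)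
      exact max_le (by omega) (by omega)
  simp only [card_univ, Fintype.card_fin, nsmul_eq_mul] at h2
  linarith

/-! ### `P^δ` in normalised form -/

/-- The defining inequalities of `P^δ`, which link consecutive block starts and consecutive members
of a column, are equivalent to the global ones of the normalised model. Here `L` and `R` are used at
every index: along a column `L` grows by `r` at each step, so `b_k + r ≤ b_{k+1}` becomes
`y_k ≤ y_{k+1}`, and `L + R` is constant. -/
lemma PdeltaR_eq_model (n r : ℕ) (hr : 1 ≤ r) (s d1 d2 : ℤ) (δ : Fin (n - 1) → Fin (r + 1)) :
    PdeltaR n r s d1 d2 δ = model (pSum n r δ) (Lstat n r δ)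
      (fun k => Lstat n r δ k + Rstat n r δ k) (blockSet n r δ) (d1 - delTotal n r δ) d2 s := by
  ext ⟨a, b⟩
  constructor
  · rintro ⟨h1, h2, h3, h4, h5⟩
    dsimp only at h1 h2 h3 h4 h5
    push_cast at h2 h3 h4
    have xbs : ∀ k i : Fin n, i ≤ k → blockStart n r δ i →
        (∀ q, blockStart n r δ q → q ≤ k → q ≤ i) →
        a k - pSum n r δ k = a i - pSum n r δ i := by
      intro k i hik hi hmax
      by_cases hk : blockStart n r δ k
      · rw [le_antisymm hik (hmax k hk le_rfl)]
      · have hlt : i < k := lt_of_le_of_ne hik fun h => hk (h ▸ hi)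
        have := h4 k hk i hi hlt fun q hq hqk => hmax q hq hqk.le
        linarith
    have step : ∀ (k : ℕ) (hk : k + 1 < n),
        a ⟨k, by omega⟩ - pSum n r δ ⟨k, by omega⟩ ≤ a ⟨k + 1, hk⟩ - pSum n r δ ⟨k + 1, hk⟩ ∧
        (¬ blockStart n r δ ⟨k + 1, hk⟩ → a ⟨k, by omega⟩ - pSum n r δ ⟨k, by omega⟩ =
          a ⟨k + 1, hk⟩ - pSum n r δ ⟨k + 1, hk⟩) := by
      intro k hk
      obtain ⟨i, hik, hi, hmax⟩ := exists_block n r δ ⟨k, by omega⟩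
      have hik' : (i : ℕ) ≤ k := hik
      have e := xbs _ i hik hi hmax
      have hne : ¬ blockStart n r δ ⟨k + 1, hk⟩ → a ⟨k, by omega⟩ - pSum n r δ ⟨k, by omega⟩ =
          a ⟨k + 1, hk⟩ - pSum n r δ ⟨k + 1, hk⟩ := by
        intro hb
        rw [e]
        refine (xbs _ i (by simp only [Fin.le_def]; omega) hi fun q hq hqk => ?_).symm
        refine hmax q hq ?_
        have : q ≠ ⟨k + 1, hk⟩ := fun h => hb (h ▸ hq)
        simp only [Fin.le_def, ne_eq, Fin.ext_iff] at *
        omega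
      refine ⟨?_, hne⟩
      by_cases hb : blockStart n r δ ⟨k + 1, hk⟩
      · rw [e]
        have := h2 i ⟨k + 1, hk⟩ hi hb (by simp only [Fin.lt_def]; omega) fun q hiq hqk hq => by
          have := hmax q hq (by simp only [Fin.le_def, Fin.lt_def] at *; omega)
          exact absurd hiq (not_lt.2 this)
        linarith
      · exact (hne hb).le
    have xmono : ∀ i j, i ≤ j → a i - pSum n r δ i ≤ a j - pSum n r δ j := fun i j hij =>
      chain (fun j => a j - pSum n r δ j) hij fun k hk _ _ => (step k hk).1
    have xconst : ∀ i j, rk (blockSet n r δ) i = rk (blockSet n r δ) j →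
        a i - pSum n r δ i = a j - pSum n r δ j := by
      intro i j h
      wlog hij : i ≤ j generalizing i j
      · exact (this j i h.symm (not_le.1 hij).le).symm
      refine le_antisymm (xmono i j hij) ?_
      have := chain (fun j => -(a j - pSum n r δ j)) hij fun k hk hik hkj => by
        refine neg_le_neg ((step k hk).2 fun hb => ?_).ge
        have h1 := rk_lt (blockSet n r δ) (i := i) (j := ⟨k + 1, hk⟩)
          (by simp only [Fin.lt_def]; omega) (mem_blockSet.2 hb)
        have h2 := rk_mono (blockSet n r δ) (i := ⟨k + 1, hk⟩) (j := j)
          (by simp only [Fin.le_def]; omega)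
        omega
      linarith
    have ymono : ∀ i j, i ≤ j → pSum n r δ i = pSum n r δ j →
        b i - Lstat n r δ i ≤ b j - Lstat n r δ j := by
      intro i j hij hσ
      obtain ⟨c, c', hci, hic', hc, hc', hcol⟩ := exists_column n r δ i
      have hjc' : j ≤ c' := by
        by_contra hlt
        -- Otherwise the column of `i` would end strictly before `j`.
        have hlt : (c' : ℕ) < j := not_le.1 hlt
        exact hcol.2.2.2 (by omega)
          (delta_eq_zero n r δ hσ c' (by omega) hic' hlt)
      refine chain (fun j => b j - Lstat n r δ j) hij fun k hk hik hkj => ?_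
      have h0 := delta_eq_zero n r δ hσ k (by omega) hik hkj
      have hb := (h5 c c' hcol).2.1 ⟨k, by omega⟩ (by simp only [Fin.le_def] at *; omega)
        (by simp only [Fin.le_def, Fin.lt_def] at *; omega) hk
      simp only at hb ⊢
      rw [Lstat_succ n r δ k hk h0]
      push_cast
      linarith
    refine ⟨xmono, xconst, fun j => ?_, fun j => ?_, ymono, fun k => ?_, fun k => ?_⟩
    · have h0 := h1 j.pos
      have := xmono ⟨0, j.pos⟩ j (Nat.zero_le _)
      rw [pSum_zero] at this
      push_cast at this
      dsimp only
      linarith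
    · have hlt : n - 1 < n := by have := j.pos; omega
      have hjl : j ≤ ⟨n - 1, hlt⟩ := by simp only [Fin.le_def]; omega
      obtain ⟨i, hil, hi, hmax⟩ := exists_block n r δ ⟨n - 1, hlt⟩
      have e := xbs _ i hil hi hmax
      have h := h3 i hi fun q hiq hq => by
        have := hmax q hq (by simp only [Fin.le_def]; omega)
        exact absurd hiq (not_lt.2 this)
      have := xmono j _ hjl
      push_cast
      linarith
    · obtain ⟨c, c', hck, hkc', hc, hc', hcol⟩ := exists_column n r δ k
      have h := (h5 c c' hcol).1
      have := ymono c k hck hc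
      dsimp only
      linarith
    · obtain ⟨c, c', hck, hkc', hc, hc', hcol⟩ := exists_column n r δ k
      have h := (h5 c c' hcol).2.2
      have h' := ymono k c' hkc' hc'.symm
      have hx := xconst c k (rk_eq_of_pSum_eq n r hr δ c k hc)
      rw [hc] at hx
      have hac : a c = a k := by linarith
      rw [hac] at h
      have hW : ((Lstat n r δ c' : ℝ) + Rstat n r δ c') = Lstat n r δ k + Rstat n r δ k := by
        exact_mod_cast LR_congr n r δ c' k hc'
      push_cast
      linarith
  · rintro ⟨p1, p2, p3, p4, p5, p6, p7⟩
    dsimp only at p1 p2 p3 p4 p5 p6 p7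
    push_cast at p4 p7
    refine ⟨fun h => ?_, fun p p' _ _ hpp' _ => ?_, fun p _ _ => ?_, fun j hj i hi hij hmax => ?_,
      fun j j' hcol => ⟨?_, fun k hjk hkj' hk => ?_, ?_⟩⟩
    · simpa [pSum_zero] using p3 ⟨0, h⟩
    · have := p1 p p' hpp'.le
      push_cast
      linarith
    · have := p4 p
      push_cast
      linarith
    · have := p2 i j (rk_eq _ hij.le fun q hq hqj => by
        have hq := mem_blockSet.1 hq
        exact hmax q hq (lt_of_le_of_ne hqj fun h => hj (h ▸ hq)))
      push_cast
      linarith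
    · have := p6 j
      dsimp only
      linarith
    · have h0 := hcol.2.2.1 k hjk hkj' (by omega)
      have hs := pSum_succ n r δ k hk
      have hL := Lstat_succ n r δ k hk h0
      have := p5 k ⟨k + 1, hk⟩ (by simp [Fin.le_def]) (by rw [hs, h0]; simp)
      rw [hL] at this
      push_cast at this
      dsimp only at this ⊢
      linarith
    · have hσ : pSum n r δ j = pSum n r δ j' := by
        refine le_antisymm (pSum_mono n r δ hcol.1) ?_
        have := chain (fun j => -pSum n r δ j) hcol.1 fun k hk hjk hkj' => by
          have h0 := hcol.2.2.1 ⟨k, by omega⟩ hjk hkj' (by simp; omega)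
          have h0 : (δ ⟨k, by omega⟩ : ℕ) = 0 := h0
          have hs := pSum_succ n r δ k hk
          rw [h0] at hs
          simp only [hs]
          simp
        linarith
      have hx := p2 j j' (rk_eq_of_pSum_eq n r hr δ j j' hσ)
      rw [hσ] at hx
      have hac : a j = a j' := by linarith
      have := p7 j'
      dsimp only
      rw [hac]
      linarith

/-- Lemma 4.2 of the paper: for `d_1, d_2 > r(n−1)`, `P^δ` is a nonempty
compact convex lattice polytope with `(ℓ(δ)+1)·∏_k (n_k(δ)+1)` extreme points, all of which
have integer coordinates. -/
theorem Pdelta_lattice_polytope (n : ℕ) (hn : 1 ≤ n) (s : ℤ) (hs : 0 ≤ s)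
    (r : ℕ) (hr : 1 ≤ r) (δ : Fin (n - 1) → Fin (r + 1)) (d1 d2 : ℤ)
    (hd1 : (r : ℤ) * ((n : ℤ) - 1) < d1) (hd2 : (r : ℤ) * ((n : ℤ) - 1) < d2) :
    (PdeltaR n r s d1 d2 δ).Nonempty ∧
    IsCompact (PdeltaR n r s d1 d2 δ) ∧
    Convex ℝ (PdeltaR n r s d1 d2 δ) ∧
    (∀ p ∈ Set.extremePoints ℝ (PdeltaR n r s d1 d2 δ),
      (∀ j : Fin n, ∃ z : ℤ, p.1 j = (z : ℝ)) ∧ (∀ j : Fin n, ∃ z : ℤ, p.2 j = (z : ℝ))) ∧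
    (Set.extremePoints ℝ (PdeltaR n r s d1 d2 δ)).ncard =
      (ellStat n r δ + 1) * ∏ v ∈ distinctVals n r δ, (nOcc n r δ v + 1) := by
  have hD : 0 < d1 - delTotal n r δ := by have := delTotal_le n r hn δ; omega
  have hΛ : ∀ k, 0 < d2 + s * pSum n r δ k - (Lstat n r δ k + Rstat n r δ k) := by
    intro k
    have h1 := LR_le n r δ k
    have h2 := mul_nonneg hs (pSum_nonneg n r δ k)
    omega
  have hσB := rk_eq_of_pSum_eq n r hr δ
  have hσW := LR_congr n r δ
  have hB : ∀ k, ∃ i ∈ blockSet n r δ, i ≤ k ∧ rk (blockSet n r δ) i = rk (blockSet n r δ) k := by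
    intro k
    obtain ⟨i, hik, hi, hmax⟩ := exists_block n r δ k
    exact ⟨i, mem_blockSet.2 hi, hik,
      rk_eq _ hik fun q hq hqk => hmax q (mem_blockSet.1 hq) hqk⟩
  rw [PdeltaR_eq_model n r hr]
  refine ⟨⟨_, vertex_mem _ _ _ _ _ _ _ hs hD hΛ hσB hσW (0, fun _ _ => 0)⟩,
    model_compact _ _ _ _ _ _ _ hs, model_convex _ _ _ _ _ _ _, ?_, ?_⟩
  · intro p hp
    obtain ⟨-, hx, hy⟩ := (mem_extreme_iff _ _ _ _ _ _ _ hs hD hΛ hσB hσW p).1 hp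
    have hxz : ∀ j : Fin n, ∃ z : ℤ, p.1 j = (z : ℝ) := by
      intro j
      rcases hx j with h | h
      · exact ⟨pSum n r δ j, by linarith⟩
      · exact ⟨pSum n r δ j + (d1 - delTotal n r δ), by push_cast at h ⊢; linarith⟩
    refine ⟨hxz, fun j => ?_⟩
    obtain ⟨z, hz⟩ := hxz j
    rcases hy j with h | h
    · exact ⟨Lstat n r δ j, by linarith⟩
    · refine ⟨Lstat n r δ j + (d2 + s * z - (Lstat n r δ j + Rstat n r δ j)), ?_⟩
      rw [hz] at h
      push_cast at h ⊢
      linarith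
  · rw [extreme_ncard _ _ _ _ _ _ _ hs hD hΛ hσB hσW hB, card_blockSet n r hn]
    rfl

end
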